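/- Let 1 ≤ p ≤ ∞ with Hölder conjugate p*, and let σ_j = j^{−λ} for j ∈ ℕ with λ > (1/2 − 1/p)₊ := max{1/2 − 1/p, 0}. Define decay(rad(E^m_{p,σ}, n)) := sup{ρ ≥ 0 : ∃ C ∈ (0,∞) with rad(E^m_{p,σ}, n) ≤ C·n^{−ρ} for all m ∈ ℕ and 1 ≤ n < m}, where rad(E^m_{p,σ}, n) := inf_{E_n} rad(E^m_{p,σ}, E_n), the infimum over all linear subspaces E_n ⊆ ℝ^m of codimension n. Then decay(rad(E^m_{p,σ}, n)) = λ·p*/2 if 1 ≤ p < 2 and λ < 1/p*, and decay(rad(E^m_{p,σ}, n)) = λ + 1/p − 1/2 otherwise. -/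

import Mathlib

open scoped ENNReal NNReal

attribute [local instance] Classical.propDecidable

/-- The `ℓ_p`-(quasi-)norm on `ℝ^m`, for `0 < p ≤ ∞`. -/
noncomputable def lpnorm (p : ℝ≥0∞) {m : ℕ} (x : Fin m → ℝ) : ℝ :=
  if p = ∞ then ⨆ j, |x j| else (∑ j, |x j| ^ p.toReal) ^ (1 / p.toReal)

/-- The `ℓ_p`-ellipsoid with semiaxes `σ`. -/
noncomputable def ellipsoid (p : ℝ≥0∞) {m : ℕ} (σ : Fin m → ℝ) : Set (Fin m → ℝ) :=
  {x | lpnorm p (fun j => x j / σ j) ≤ 1}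

/-- `rad_q(K, E)`: the supremum of the `ℓ_q`-norm over `K ∩ E`. -/
noncomputable def radq (q : ℝ≥0∞) {m : ℕ} (K E : Set (Fin m → ℝ)) : ℝ :=
  sSup (lpnorm q '' (K ∩ E))

/-- The minimal radius `rad(E^m_{p,σ}, n)`: the infimum of the circumradius of sections of
the `ℓ_p`-ellipsoid over all linear subspaces of `ℝ^m` of codimension `n`. -/
noncomputable def minrad (p : ℝ≥0∞) {m : ℕ} (σ : Fin m → ℝ) (n : ℕ) : ℝ :=
  sInf { t | ∃ E : Submodule ℝ (Fin m → ℝ),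
      Module.finrank ℝ ((Fin m → ℝ) ⧸ E) = n ∧
      t = radq 2 (ellipsoid p σ) (E : Set (Fin m → ℝ)) }

/-- The Hölder conjugate `p*` of `p ∈ (1, ∞]`, as a real number
(with the convention `(∞ : ℝ≥0∞).toReal = 0`, so `pstar ∞ = 1`; note `1/p* = 1 - 1/p`). -/
noncomputable def pstar (p : ℝ≥0∞) : ℝ := (1 - 1 / p.toReal)⁻¹


lemma lpnorm_two {m : ℕ} (x : Fin m → ℝ) : lpnorm 2 x = Real.sqrt (∑ j, x j ^ 2) := by
  unfold lpnorm
  rw [if_neg (by norm_num), Real.sqrt_eq_rpow]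
  simp

lemma mem_ellipsoid_top {m : ℕ} (σ x : Fin m → ℝ) :
    x ∈ ellipsoid ∞ σ ↔ ∀ j, |x j / σ j| ≤ 1 := by
  unfold ellipsoid lpnorm
  simp only [if_true, Set.mem_setOf_eq]
  constructor
  · intro h j
    exact (le_ciSup (f := fun j => |x j / σ j|) (Set.finite_range _).bddAbove j).trans h
  · intro h
    exact Real.iSup_le h zero_le_one

lemma mem_ellipsoid_fin {m : ℕ} (p : ℝ≥0∞) (hp : 1 ≤ p) (hp' : p ≠ ∞) (σ x : Fin m → ℝ) :
    x ∈ ellipsoid p σ ↔ ∑ j, |x j / σ j| ^ p.toReal ≤ 1 := by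
  have h0 : 0 < p.toReal := ENNReal.toReal_pos (by rintro rfl; simp at hp) hp'
  have hs : 0 ≤ ∑ j, |x j / σ j| ^ p.toReal :=
    Finset.sum_nonneg fun j _ => Real.rpow_nonneg (abs_nonneg _) _
  unfold ellipsoid lpnorm
  simp only [if_neg hp', Set.mem_setOf_eq]
  constructor
  · intro h
    by_contra hc
    push Not at hc
    exact absurd h (not_le.2 (Real.one_lt_rpow hc (by positivity)))
  · intro h
    exact Real.rpow_le_one hs h (by positivity)

lemma mem_ellipsoid_abs {m : ℕ} (p : ℝ≥0∞) (hp : 1 ≤ p) (σ x : Fin m → ℝ)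
    (h : x ∈ ellipsoid p σ) (j : Fin m) : |x j / σ j| ≤ 1 := by
  by_cases hp' : p = ∞
  · subst hp'
    exact (mem_ellipsoid_top σ x).1 h j
  · have h0 : 0 < p.toReal := ENNReal.toReal_pos (by rintro rfl; simp at hp) hp'
    rw [mem_ellipsoid_fin p hp hp'] at h
    have h1 := (Finset.single_le_sum (f := fun j => |x j / σ j| ^ p.toReal)
      (fun j _ => Real.rpow_nonneg (abs_nonneg _) _) (Finset.mem_univ j)).trans h
    by_contra hc
    push Not at hc
    exact absurd h1 (not_le.2 (Real.one_lt_rpow hc h0))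

lemma radq_nonneg {m : ℕ} (K E : Set (Fin m → ℝ)) : 0 ≤ radq 2 K E := by
  apply Real.sSup_nonneg
  rintro _ ⟨x, _, rfl⟩
  rw [lpnorm_two]
  exact Real.sqrt_nonneg _

lemma exists_codim {m n : ℕ} (hn : n ≤ m) (E : Submodule ℝ (Fin m → ℝ))
    (hE : Module.finrank ℝ ((Fin m → ℝ) ⧸ E) ≤ n) :
    ∃ F : Submodule ℝ (Fin m → ℝ), F ≤ E ∧ Module.finrank ℝ ((Fin m → ℝ) ⧸ F) = n := by
  have h1 := E.finrank_quotient_add_finrank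
  simp only [Module.finrank_fintype_fun_eq_card, Fintype.card_fin] at h1
  obtain ⟨f, hf⟩ := exists_linearIndependent_of_le_finrank (R := ℝ) (M := E)
    (show m - n ≤ Module.finrank ℝ E by omega)
  have hf2 : LinearIndependent ℝ (fun i => (f i : Fin m → ℝ)) :=
    hf.map' E.subtype (Submodule.ker_subtype E)
  obtain ⟨F, hF, hF'⟩ : ∃ F : Submodule ℝ (Fin m → ℝ), F ≤ E ∧ Module.finrank ℝ F = m - n := by
    refine ⟨Submodule.span ℝ (Set.range fun i => (f i : Fin m → ℝ)), ?_, ?_⟩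
    · rw [Submodule.span_le]
      rintro _ ⟨i, rfl⟩
      exact (f i).2
    · rw [finrank_span_eq_card hf2]; simp
  refine ⟨F, hF, ?_⟩
  have h2 := F.finrank_quotient_add_finrank
  simp only [Module.finrank_fintype_fun_eq_card, Fintype.card_fin] at h2
  omega

lemma minrad_le {m n : ℕ} (p : ℝ≥0∞) (σ : Fin m → ℝ) (hn : n ≤ m) (E : Submodule ℝ (Fin m → ℝ))
    (hE : Module.finrank ℝ ((Fin m → ℝ) ⧸ E) ≤ n) (t : ℝ) (ht : 0 ≤ t)
    (h : ∀ x ∈ E, x ∈ ellipsoid p σ → ∑ j, x j ^ 2 ≤ t ^ 2) : minrad p σ n ≤ t := by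
  obtain ⟨F, hF, hF'⟩ := exists_codim hn E hE
  have : minrad p σ n ≤ radq 2 (ellipsoid p σ) (F : Set (Fin m → ℝ)) := by
    apply csInf_le
    · refine ⟨0, ?_⟩
      rintro _ ⟨E, _, rfl⟩
      exact radq_nonneg _ _
    · exact ⟨F, hF', rfl⟩
  refine this.trans ?_
  apply Real.sSup_le _ ht
  rintro _ ⟨x, ⟨hx, hx'⟩, rfl⟩
  rw [lpnorm_two]
  exact Real.sqrt_le_left ht |>.2 (h x (hF hx') hx)

lemma le_minrad {m n : ℕ} (p : ℝ≥0∞) (hp : 1 ≤ p) (σ : Fin m → ℝ) (hσ : ∀ j, 0 < σ j)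
    (hn : n ≤ m) (t : ℝ) (ht : 0 ≤ t)
    (h : ∀ E : Submodule ℝ (Fin m → ℝ), Module.finrank ℝ ((Fin m → ℝ) ⧸ E) = n →
      ∃ x ∈ E, x ∈ ellipsoid p σ ∧ t ^ 2 ≤ ∑ j, x j ^ 2) : t ≤ minrad p σ n := by
  apply le_csInf
  · have htop : Module.finrank ℝ ((Fin m → ℝ) ⧸ (⊤ : Submodule ℝ (Fin m → ℝ))) ≤ n := by
      have h1 := (⊤ : Submodule ℝ (Fin m → ℝ)).finrank_quotient_add_finrank
      simp only [Module.finrank_fintype_fun_eq_card, Fintype.card_fin, finrank_top] at h1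
      omega
    obtain ⟨F, _, hF⟩ := exists_codim hn ⊤ htop
    exact ⟨_, F, hF, rfl⟩
  · rintro _ ⟨E, hE, rfl⟩
    obtain ⟨x, hx, hx', hx2⟩ := h E hE
    have : lpnorm 2 x ≤ radq 2 (ellipsoid p σ) (E : Set (Fin m → ℝ)) := by
      apply le_csSup
      · refine ⟨Real.sqrt (∑ j, σ j ^ 2), ?_⟩
        rintro _ ⟨y, ⟨hy, _⟩, rfl⟩
        rw [lpnorm_two]
        apply Real.sqrt_le_sqrt
        apply Finset.sum_le_sum
        intro j _
        have := mem_ellipsoid_abs p hp σ y hy j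
        rw [abs_div, abs_of_pos (hσ j), div_le_one (hσ j)] at this
        rw [← sq_abs]
        gcongr
      · exact ⟨x, ⟨hx', hx⟩, rfl⟩
    refine le_trans ?_ this
    rw [lpnorm_two]
    exact Real.le_sqrt_of_sq_le hx2

/-- sign of a boolean -/
noncomputable def bsg (b : Bool) : ℝ := if b then 1 else -1

lemma bsg_sq (b : Bool) : bsg b ^ 2 = 1 := by cases b <;> simp [bsg]

lemma sum_bsg_mul {ι : Type*} [Fintype ι] [DecidableEq ι] (a : ι) (F : (ι → Bool) → ℝ)
    (hF : ∀ e, F (Function.update e a (!(e a))) = F e) :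
    ∑ e : ι → Bool, bsg (e a) * F e = 0 := by
  let φ : (ι → Bool) → (ι → Bool) := fun e => Function.update e a (!(e a))
  have hφ : Function.Involutive φ := by
    intro e
    ext j
    by_cases h : j = a
    · subst h; simp [φ]
    · simp [φ, h]
  have h1 : ∑ e : ι → Bool, bsg (e a) * F e = ∑ e : ι → Bool, bsg (φ e a) * F (φ e) :=
    (Equiv.sum_comp hφ.toPerm (fun e => bsg (e a) * F e)).symm
  have h2 : ∑ e : ι → Bool, bsg (φ e a) * F (φ e) = - ∑ e : ι → Bool, bsg (e a) * F e := by
    rw [← Finset.sum_neg_distrib]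
    apply Finset.sum_congr rfl
    intro e _
    have : F (φ e) = F e := hF e
    rw [this]
    have : bsg (φ e a) = - bsg (e a) := by
      simp only [φ, Function.update_self]
      cases e a <;> simp [bsg]
    rw [this]; ring
  linarith

lemma rad_inv {ι : Type*} [DecidableEq ι] (a : ι) (s : Finset ι) (ha : a ∉ s)
    (y : ι → ℝ) (e : ι → Bool) :
    ∑ j ∈ s, bsg (Function.update e a (!(e a)) j) * y j = ∑ j ∈ s, bsg (e j) * y j := by
  apply Finset.sum_congr rfl
  intro j hj
  rw [Function.update_of_ne (by rintro rfl; exact ha hj)]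

lemma rad_two {ι : Type*} [Fintype ι] [DecidableEq ι] (y : ι → ℝ) (s : Finset ι) :
    ∑ e : ι → Bool, (∑ j ∈ s, bsg (e j) * y j) ^ 2
      = Fintype.card (ι → Bool) * ∑ j ∈ s, y j ^ 2 := by
  induction s using Finset.induction_on with
  | empty => simp
  | insert a s ha ih =>
    have h := sum_bsg_mul a (fun e => 2 * y a * ∑ j ∈ s, bsg (e j) * y j) (by
      intro e; rw [rad_inv a s ha])
    have : ∀ e : ι → Bool, (∑ j ∈ insert a s, bsg (e j) * y j) ^ 2 =
        y a ^ 2 + (∑ j ∈ s, bsg (e j) * y j) ^ 2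
         + bsg (e a) * (2 * y a * ∑ j ∈ s, bsg (e j) * y j) := by
      intro e
      rw [Finset.sum_insert ha]
      linear_combination (y a ^ 2) * bsg_sq (e a)
    rw [Finset.sum_congr rfl (fun e _ => this e)]
    simp only [Finset.sum_add_distrib, h, ih, Finset.sum_insert ha]
    simp
    ring

lemma rad_four {ι : Type*} [Fintype ι] [DecidableEq ι] (y : ι → ℝ) (s : Finset ι) :
    ∑ e : ι → Bool, (∑ j ∈ s, bsg (e j) * y j) ^ 4
      ≤ Fintype.card (ι → Bool) * (3 * (∑ j ∈ s, y j ^ 2) ^ 2) := by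
  induction s using Finset.induction_on with
  | empty => simp
  | insert a s ha ih =>
    have h := sum_bsg_mul a (fun e => 4 * y a ^ 3 * (∑ j ∈ s, bsg (e j) * y j) + 
        4 * y a * (∑ j ∈ s, bsg (e j) * y j) ^ 3) (by
      intro e; rw [rad_inv a s ha])
    have : ∀ e : ι → Bool, (∑ j ∈ insert a s, bsg (e j) * y j) ^ 4 =
        y a ^ 4 + 6 * y a ^ 2 * (∑ j ∈ s, bsg (e j) * y j) ^ 2 + (∑ j ∈ s, bsg (e j) * y j) ^ 4
         + bsg (e a) * (4 * y a ^ 3 * (∑ j ∈ s, bsg (e j) * y j) + 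
        4 * y a * (∑ j ∈ s, bsg (e j) * y j) ^ 3) := by
      intro e
      rw [Finset.sum_insert ha]
      have h2 := bsg_sq (e a)
      set b := bsg (e a)
      set R := ∑ j ∈ s, bsg (e j) * y j
      linear_combination (y a ^ 4 * (b ^ 2 + 1) + 4 * b * y a ^ 3 * R + 6 * y a ^ 2 * R ^ 2) * h2
    rw [Finset.sum_congr rfl (fun e _ => this e)]
    simp only [Finset.sum_add_distrib, h, Finset.sum_insert ha, ← Finset.mul_sum,
      rad_two]
    simp only [Finset.sum_const, Finset.card_univ, nsmul_eq_mul]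
    set N : ℝ := (Fintype.card (ι → Bool) : ℝ)
    have hN : 0 ≤ N := Nat.cast_nonneg _
    have : 0 ≤ N * (y a ^ 4) := by positivity
    nlinarith

lemma exp_neg_le_quad (z : ℝ) (hz : 0 ≤ z) : Real.exp (-z) ≤ 1 - z + z ^ 2 / 2 := by
  have h1 := Real.quadratic_le_exp_of_nonneg hz
  rw [Real.exp_neg, inv_le_comm₀ (Real.exp_pos _) (by nlinarith [sq_nonneg (z - 1)])]
  refine le_trans ?_ h1
  rw [inv_le_iff_one_le_mul₀ (by nlinarith [sq_nonneg (z - 1)])]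
  nlinarith [sq_nonneg (z ^ 2)]

lemma rad_exp {ι : Type*} [Fintype ι] [DecidableEq ι] (y : ι → ℝ) (hy : 0 < ∑ j, y j ^ 2) :
    ∑ e : ι → Bool, Real.exp (-((∑ j, bsg (e j) * y j) ^ 2 / (3 * ∑ j, y j ^ 2)))
      ≤ Fintype.card (ι → Bool) * (5 / 6) := by
  set Y := ∑ j, y j ^ 2 with hY
  have h2 := rad_two y Finset.univ
  have h4 := rad_four y Finset.univ
  rw [← hY] at h2 h4
  set N : ℝ := (Fintype.card (ι → Bool) : ℝ) with hN
  calc ∑ e : ι → Bool, Real.exp (-((∑ j, bsg (e j) * y j) ^ 2 / (3 * Y)))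
      ≤ ∑ e : ι → Bool, (1 - (∑ j, bsg (e j) * y j) ^ 2 / (3 * Y)
          + ((∑ j, bsg (e j) * y j) ^ 2 / (3 * Y)) ^ 2 / 2) :=
        Finset.sum_le_sum fun e _ => exp_neg_le_quad _ (by positivity)
    _ = N - (∑ e : ι → Bool, (∑ j, bsg (e j) * y j) ^ 2) / (3 * Y)
          + (∑ e : ι → Bool, (∑ j, bsg (e j) * y j) ^ 4) / (18 * Y ^ 2) := by
        rw [Finset.sum_add_distrib, Finset.sum_sub_distrib, Finset.sum_div, Finset.sum_div]
        congr 1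
        · simp [hN]
        · apply Finset.sum_congr rfl
          intro e _
          field_simp
          ring
    _ ≤ N - (N * Y) / (3 * Y) + (N * (3 * Y ^ 2)) / (18 * Y ^ 2) := by
        rw [h2]; gcongr
    _ = N * (5 / 6) := by field_simp; ring

lemma count_bad {ι : Type*} [Fintype ι] [DecidableEq ι] (n : ℕ) (y : ι → ℝ) :
    ((Finset.univ.filter fun A : Fin n → ι → Bool =>
      ∑ i, (∑ j, bsg (A i j) * y j) ^ 2 < n * (∑ j, y j ^ 2) / 4).card : ℝ)
      ≤ (Fintype.card (ι → Bool) : ℝ) ^ n * (10 / 11) ^ n := by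
  have hY0 : 0 ≤ ∑ j, y j ^ 2 := Finset.sum_nonneg fun _ _ => sq_nonneg _
  rcases hY0.eq_or_lt with hY | hY
  · rw [← hY, Finset.filter_eq_empty_iff.2]
    · simp; positivity
    · intro A _
      simp only [mul_zero, zero_div, not_lt]
      positivity
  set Y := ∑ j, y j ^ 2 with hYd
  set N : ℝ := (Fintype.card (ι → Bool) : ℝ) with hN
  set B := (Finset.univ.filter fun A : Fin n → ι → Bool =>
      ∑ i, (∑ j, bsg (A i j) * y j) ^ 2 < n * Y / 4)
  have h1 : (B.card : ℝ) * Real.exp (-(n / 12)) ≤ (N * (5 / 6)) ^ n := by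
    calc (B.card : ℝ) * Real.exp (-(n / 12)) = ∑ A ∈ B, Real.exp (-(n / 12)) := by simp
      _ ≤ ∑ A ∈ B, ∏ i, Real.exp (-((∑ j, bsg (A i j) * y j) ^ 2 / (3 * Y))) := by
        apply Finset.sum_le_sum
        intro A hA
        have hA : ∑ i, (∑ j, bsg (A i j) * y j) ^ 2 < n * Y / 4 := (Finset.mem_filter.1 hA).2
        rw [← Real.exp_sum]
        apply Real.exp_le_exp.2
        rw [Finset.sum_neg_distrib, ← Finset.sum_div]
        apply neg_le_neg
        rw [div_le_iff₀ (by positivity)]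
        linarith
      _ ≤ ∑ A : Fin n → ι → Bool, ∏ i, Real.exp (-((∑ j, bsg (A i j) * y j) ^ 2 / (3 * Y))) :=
        Finset.sum_le_sum_of_subset_of_nonneg (Finset.subset_univ _)
          (fun A _ _ => Finset.prod_nonneg fun i _ => (Real.exp_pos _).le)
      _ = (∑ e : ι → Bool, Real.exp (-((∑ j, bsg (e j) * y j) ^ 2 / (3 * Y)))) ^ n :=
        (Fintype.sum_pow (fun e : ι → Bool =>
          Real.exp (-((∑ j, bsg (e j) * y j) ^ 2 / (3 * Y)))) n).symm
      _ ≤ (N * (5 / 6)) ^ n := by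
        apply pow_le_pow_left₀ (Finset.sum_nonneg fun e _ => (Real.exp_pos _).le)
        exact rad_exp y hY
  have h2 : ((11:ℝ) / 12) ^ n ≤ Real.exp (-(n / 12)) := by
    have : Real.exp (-((n:ℝ) / 12)) = Real.exp (-(1/12)) ^ n := by
      rw [← Real.exp_nat_mul]; congr 1; ring
    rw [this]
    apply pow_le_pow_left₀ (by norm_num)
    have := Real.add_one_le_exp (-(1/12) : ℝ)
    linarith
  have h3 : (B.card : ℝ) * (11 / 12) ^ n ≤ (N * (5 / 6)) ^ n :=
    (mul_le_mul_of_nonneg_left h2 (Nat.cast_nonneg _)).trans h1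
  have h4 : (N * (5 / 6)) ^ n = (N ^ n * (10 / 11) ^ n) * (11 / 12) ^ n := by
    rw [← mul_pow, ← mul_pow]; congr 1; ring
  rw [h4] at h3
  exact le_of_mul_le_mul_right h3 (by positivity)

lemma exists_good {ι κ : Type*} [Fintype ι] [DecidableEq ι] [Fintype κ] (n : ℕ) (Y : κ → ι → ℝ)
    (h : (Fintype.card κ : ℝ) * (10 / 11) ^ n < 1) :
    ∃ A : Fin n → ι → Bool, ∀ g, n * (∑ j, Y g j ^ 2) / 4 ≤ ∑ i, (∑ j, bsg (A i j) * Y g j) ^ 2 := by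
  by_contra hc
  push Not at hc
  set N : ℝ := (Fintype.card (ι → Bool) : ℝ) with hN
  have hNpos : 0 < N := by rw [hN]; exact_mod_cast Fintype.card_pos
  have h1 : (Finset.univ : Finset (Fin n → ι → Bool)) ⊆ Finset.univ.biUnion fun g : κ =>
    (Finset.univ.filter fun A : Fin n → ι → Bool =>
      ∑ i, (∑ j, bsg (A i j) * Y g j) ^ 2 < n * (∑ j, Y g j ^ 2) / 4) := by
    intro A _
    obtain ⟨g, hg⟩ := hc A
    simp only [Finset.mem_biUnion, Finset.mem_filter, Finset.mem_univ, true_and]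
    exact ⟨g, hg⟩
  have h2 := (Finset.card_le_card h1).trans Finset.card_biUnion_le
  have h3 : ((Finset.univ : Finset (Fin n → ι → Bool)).card : ℝ) = N ^ n := by
    rw [Finset.card_univ, Fintype.card_fun]; simp [hN]
  have h4 : N ^ n ≤ ∑ g : κ, N ^ n * (10 / 11) ^ n := by
    rw [← h3]
    refine le_trans (Nat.cast_le.2 h2) ?_
    rw [h3]
    push_cast
    exact Finset.sum_le_sum fun g _ => count_bad n (Y g)
  simp only [Finset.sum_const, Finset.card_univ, nsmul_eq_mul] at h4
  have : 0 < N ^ n := by positivity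
  nlinarith

lemma maurey {α ι : Type*} [Fintype α] [Fintype ι] (w : α → ℝ) (hw : ∀ a, 0 ≤ w a)
    (hw1 : ∑ a, w a = 1) (v : α → ι → ℝ) (x : ι → ℝ) (hx : ∀ i, ∑ a, w a * v a i = x i)
    (B : ℝ) (hB : ∀ a, ∑ i, v a i ^ 2 ≤ B) (k : ℕ) :
    ∃ g : Fin k → α, ∑ i, (∑ l, v (g l) i - k * x i) ^ 2 ≤ k * B := by
  induction k with
  | zero => exact ⟨Fin.elim0, by simp⟩
  | succ k ih =>
    obtain ⟨g, hg⟩ := ih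
    set u : ι → ℝ := fun i => ∑ l, v (g l) i - k * x i with hu
    have key : ∑ a, w a * ∑ i, (u i + v a i - x i) ^ 2 ≤ ∑ a, w a * ((k + 1) * B) := by
      have e1 : ∀ a, w a * ∑ i, (u i + v a i - x i) ^ 2 =
          w a * (∑ i, v a i ^ 2) + ∑ i, (w a * (u i - x i) ^ 2 + (w a * v a i) * (2 * (u i - x i))) := by
        intro a
        rw [Finset.mul_sum, Finset.mul_sum, ← Finset.sum_add_distrib]
        apply Finset.sum_congr rfl
        intro i _; ring
      have e2 : ∑ a, ∑ i, (w a * (u i - x i) ^ 2 + (w a * v a i) * (2 * (u i - x i)))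
          = ∑ i, (u i ^ 2 - x i ^ 2) := by
        rw [Finset.sum_comm]
        apply Finset.sum_congr rfl
        intro i _
        rw [Finset.sum_add_distrib, ← Finset.sum_mul, ← Finset.sum_mul, hw1, hx]
        ring
      simp only [e1]
      rw [Finset.sum_add_distrib, e2, ← Finset.sum_mul, hw1, Finset.sum_sub_distrib]
      have e3 : ∑ a, w a * (∑ i, v a i ^ 2) ≤ ∑ a, w a * B :=
        Finset.sum_le_sum fun a _ => mul_le_mul_of_nonneg_left (hB a) (hw a)
      rw [← Finset.sum_mul, hw1] at e3
      have e4 : 0 ≤ ∑ i, x i ^ 2 := Finset.sum_nonneg fun _ _ => sq_nonneg _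
      linarith
    obtain ⟨a, ha⟩ : ∃ a, ∑ i, (u i + v a i - x i) ^ 2 ≤ (k + 1) * B := by
      by_contra hc
      push Not at hc
      have : ∃ a, 0 < w a := by
        by_contra h0
        push Not at h0
        have : ∑ a, w a ≤ 0 := Finset.sum_nonpos fun a _ => h0 a
        linarith
      obtain ⟨a, ha⟩ := this
      have := Finset.sum_lt_sum (s := Finset.univ)
        (f := fun a => w a * ((k + 1) * B)) (g := fun a => w a * ∑ i, (u i + v a i - x i) ^ 2)
        (fun a _ => mul_le_mul_of_nonneg_left (hc a).le (hw a))
        ⟨a, Finset.mem_univ _, mul_lt_mul_of_pos_left (hc a) ha⟩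
      linarith
    refine ⟨Fin.snoc g a, ?_⟩
    push_cast
    refine le_trans (le_of_eq ?_) ha
    apply Finset.sum_congr rfl
    intro i _
    rw [Fin.sum_univ_castSucc]
    simp only [Fin.snoc_castSucc, Fin.snoc_last, hu]
    ring

lemma l1_ker {ι : Type*} [Fintype ι] [DecidableEq ι] (n k : ℕ) (hn : 0 < n) (hk : 0 < k)
    (h : (2 * (Fintype.card ι : ℝ)) ^ k * (10 / 11) ^ n < 1) :
    ∃ A : Fin n → ι → ℝ, ∀ x : ι → ℝ, (∀ i, ∑ j, A i j * x j = 0) →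
      k * ∑ j, x j ^ 2 ≤ 16 * (∑ j, |x j|) ^ 2 := by
  have hk' : (0:ℝ) < k := by exact_mod_cast hk
  have hn' : (0:ℝ) < n := by exact_mod_cast hn
  obtain ⟨A, hA⟩ := exists_good (κ := Fin k → ι × Bool) n
    (fun g j => ∑ l, if (g l).1 = j then bsg (g l).2 else 0) (by
      refine lt_of_eq_of_lt ?_ h
      simp [mul_comm])
  refine ⟨fun i j => bsg (A i j), fun x hx => ?_⟩
  set X := ∑ j, |x j| with hX
  have hX0 : 0 ≤ X := Finset.sum_nonneg fun _ _ => abs_nonneg _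
  rcases hX0.eq_or_lt with h0 | h0
  · have : ∀ j, x j = 0 := by
      intro j
      have := (Finset.sum_eq_zero_iff_of_nonneg (fun j _ => abs_nonneg (x j))).1
        (hX.symm.trans h0.symm) j (Finset.mem_univ j)
      exact abs_eq_zero.1 this
    simp [this]
    positivity
  let s : ι → Bool := fun j => if 0 ≤ x j then true else false
  have hs : ∀ j, |x j| * bsg (s j) = x j := by
    intro j
    by_cases hj : 0 ≤ x j
    · simp [s, hj, bsg]
    · simp [s, hj, bsg, abs_of_neg (not_le.1 hj)]
  let v : ι → (ι ⊕ Fin n) → ℝ := fun a => Sum.elim (fun j => if a = j then bsg (s a) else 0)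
    (fun i => bsg (A i a) * bsg (s a) / Real.sqrt n)
  obtain ⟨g, hg⟩ := maurey (fun j => |x j| / X) (fun j => by positivity)
    (by rw [← Finset.sum_div, ← hX, div_self h0.ne']) v
    (Sum.elim (fun j => x j / X) (fun _ => 0))
    (by
      rintro (j | i)
      · simp only [v, Sum.elim_inl, mul_ite, mul_zero, Finset.sum_ite_eq', Finset.mem_univ, if_true]
        rw [div_mul_eq_mul_div, hs]
      · simp only [v, Sum.elim_inr]
        have : ∀ a, |x a| / X * (bsg (A i a) * bsg (s a) / Real.sqrt n) =
            bsg (A i a) * x a * (1 / (X * Real.sqrt n)) := by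
          intro a
          conv_rhs => rw [← hs a]
          field_simp
        simp only [this]
        rw [← Finset.sum_mul, hx i, zero_mul])
    2 (by
      intro a
      rw [Fintype.sum_sum_type]
      simp only [v, Sum.elim_inl, Sum.elim_inr, ite_pow, bsg_sq, div_pow, mul_pow,
        Real.sq_sqrt hn'.le]
      simp [hn'.ne']
      norm_num) k
  have hA' := hA (fun l => (g l, s (g l)))
  rw [Fintype.sum_sum_type] at hg
  simp only [v, Sum.elim_inl, Sum.elim_inr, mul_zero, sub_zero] at hg hA'
  set y : ι → ℝ := fun j => ∑ l, if g l = j then bsg (s (g l)) else 0 with hy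
  have e1 : ∀ i, (∑ l, bsg (A i (g l)) * bsg (s (g l)) / Real.sqrt n) ^ 2
      = (∑ j, bsg (A i j) * y j) ^ 2 / n := by
    intro i
    rw [← Finset.sum_div, div_pow, Real.sq_sqrt hn'.le]
    congr 2
    simp only [hy, Finset.mul_sum]
    rw [Finset.sum_comm]
    apply Finset.sum_congr rfl
    intro l _
    simp
  simp only [e1] at hg
  rw [← Finset.sum_div] at hg
  have e2 : (∑ j, y j ^ 2) / 4 ≤ (∑ i, (∑ j, bsg (A i j) * y j) ^ 2) / n := by
    rw [le_div_iff₀ hn']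
    calc (∑ j, y j ^ 2) / 4 * n = n * (∑ j, y j ^ 2) / 4 := by ring
      _ ≤ _ := hA'
  have e3 : ∑ j, (k * (x j / X)) ^ 2 ≤ ∑ j, (2 * y j ^ 2 + 8 * (y j - k * (x j / X)) ^ 2) := by
    apply Finset.sum_le_sum
    intro j _
    nlinarith [sq_nonneg (2 * y j - k * (x j / X)), sq_nonneg (y j - k * (x j / X))]
  rw [Finset.sum_add_distrib, ← Finset.mul_sum, ← Finset.mul_sum] at e3
  have e4 : ∑ j, (k * (x j / X)) ^ 2 = k ^ 2 / X ^ 2 * ∑ j, x j ^ 2 := by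
    rw [Finset.mul_sum]
    apply Finset.sum_congr rfl
    intro j _
    field_simp
  rw [e4] at e3
  have e5 : (k:ℝ) ^ 2 / X ^ 2 * ∑ j, x j ^ 2 ≤ 16 * k := by linarith
  rw [div_mul_eq_mul_div, div_le_iff₀ (by positivity)] at e5
  have : (k:ℝ) * (k * ∑ j, x j ^ 2) ≤ k * (16 * X ^ 2) := by linarith
  exact le_of_mul_le_mul_left this hk'

lemma cube_point {m n : ℕ} (E : Submodule ℝ (Fin m → ℝ)) (hE : n ≤ Module.finrank ℝ E) :
    ∃ x ∈ E, (∀ j, |x j| ≤ 1) ∧ (n : ℝ) ≤ ∑ j, x j ^ 2 := by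
  have hK : IsCompact ((E : Set (Fin m → ℝ)) ∩ Metric.closedBall 0 1) :=
    (isCompact_closedBall _ _).inter_left E.closed_of_finiteDimensional
  obtain ⟨x, ⟨hxE, hxB⟩, hmax⟩ := hK.exists_isMaxOn ⟨0, E.zero_mem, by simp⟩
    (f := fun x : Fin m → ℝ => ∑ j, x j ^ 2) (by fun_prop)
  have hx1 : ∀ j, |x j| ≤ 1 := by
    have := mem_closedBall_zero_iff.1 hxB
    intro j
    exact (norm_le_pi_norm x j).trans this
  refine ⟨x, hxE, hx1, ?_⟩
  set S := Finset.univ.filter fun j => |x j| = 1 with hS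
  have hSle : (S.card : ℝ) ≤ ∑ j, x j ^ 2 := by
    calc (S.card : ℝ) = ∑ j ∈ S, x j ^ 2 := by
          rw [Finset.sum_congr rfl (g := fun _ => (1:ℝ))]
          · simp
          · intro j hj
            rw [← sq_abs, (Finset.mem_filter.1 hj).2]; norm_num
      _ ≤ _ := Finset.sum_le_sum_of_subset_of_nonneg (Finset.subset_univ _)
          (fun _ _ _ => sq_nonneg _)
  by_contra hc
  push Not at hc
  have hlt : S.card < Module.finrank ℝ E := by
    have : (S.card : ℝ) < n := lt_of_le_of_lt hSle hc
    have : S.card < n := by exact_mod_cast this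
    omega
  let φ : E →ₗ[ℝ] (S → ℝ) :=
    { toFun := fun v j => (v : Fin m → ℝ) j
      map_add' := fun _ _ => rfl
      map_smul' := fun _ _ => rfl }
  have hker : LinearMap.ker φ ≠ ⊥ := by
    apply LinearMap.ker_ne_bot_of_finrank_lt
    simpa using hlt
  obtain ⟨v, hv, hv0⟩ := Submodule.exists_mem_ne_zero_of_ne_bot hker
  have hvS : ∀ j, |x j| = 1 → (v : Fin m → ℝ) j = 0 := by
    intro j hj
    have := congrFun (LinearMap.mem_ker.1 hv) ⟨j, by simp [hS, hj]⟩
    exact this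
  set V : Fin m → ℝ := (v : Fin m → ℝ) with hV
  have hVne : V ≠ 0 := fun h => hv0 (Subtype.ext h)
  -- small t
  have hev : ∀ j, ∀ᶠ t in nhdsWithin (0:ℝ) (Set.Ioi 0), |x j| + t * |V j| ≤ 1 := by
    intro j
    by_cases hj : |x j| = 1
    · simp [hvS j hj, hj]
    · have hlt : |x j| < 1 := lt_of_le_of_ne (hx1 j) hj
      have : Filter.Tendsto (fun t : ℝ => |x j| + t * |V j|) (nhds 0) (nhds (|x j| + 0 * |V j|)) := by
        apply Continuous.tendsto
        fun_prop
      have := (this.eventually_le_const (by simpa using hlt))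
      exact Filter.Eventually.filter_mono nhdsWithin_le_nhds this
  obtain ⟨t, ht, ht0⟩ := ((Filter.eventually_all.2 hev).and self_mem_nhdsWithin).exists
  have ht0 : 0 < t := ht0
  have hmem : ∀ s : ℝ, |s| = t → ∑ j, (x j + s * V j) ^ 2 ≤ ∑ j, x j ^ 2 := by
    intro s hs
    have : x + s • V ∈ (E : Set (Fin m → ℝ)) ∩ Metric.closedBall 0 1 := by
      refine ⟨E.add_mem hxE (E.smul_mem _ v.2), ?_⟩
      rw [mem_closedBall_zero_iff, pi_norm_le_iff_of_nonneg zero_le_one]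
      intro j
      have h1 : |x j + s * V j| ≤ |x j| + |s * V j| := abs_add_le _ _
      rw [abs_mul, hs] at h1
      exact h1.trans (ht j)
    exact hmax this
  have h1 := hmem t (abs_of_pos ht0)
  have h2 := hmem (-t) (by rw [abs_neg, abs_of_pos ht0])
  have h3 : ∑ j, (x j + t * V j) ^ 2 + ∑ j, (x j + -t * V j) ^ 2
      = 2 * ∑ j, x j ^ 2 + 2 * t ^ 2 * ∑ j, V j ^ 2 := by
    rw [Finset.mul_sum, Finset.mul_sum, ← Finset.sum_add_distrib, ← Finset.sum_add_distrib]
    apply Finset.sum_congr rfl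
    intro j _; ring
  have h4 : 0 < ∑ j, V j ^ 2 := by
    obtain ⟨j, hj⟩ := Function.ne_iff.1 hVne
    exact Finset.sum_pos' (fun _ _ => sq_nonneg _) ⟨j, Finset.mem_univ _, by
      have : V j ≠ 0 := hj
      positivity⟩
  have h5 : 0 < 2 * t ^ 2 * ∑ j, V j ^ 2 := by positivity
  linarith

lemma proj_point {m n : ℕ} (hm : 0 < m) (E : Submodule ℝ (Fin m → ℝ))
    (hE : Module.finrank ℝ ((Fin m → ℝ) ⧸ E) = n) :
    ∃ (j : Fin m) (w : Fin m → ℝ), (Pi.single j 1 - w) ∈ E ∧ w j = ∑ i, w i ^ 2 ∧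
      ∑ i, w i ^ 2 ≤ n / m := by
  let L := WithLp.linearEquiv 2 ℝ (Fin m → ℝ)
  let E' : Submodule ℝ (EuclideanSpace ℝ (Fin m)) := E.comap L.toLinearMap
  have hfE' : Module.finrank ℝ E' = Module.finrank ℝ E := by
    have : E'.map L.toLinearMap = E := Submodule.map_comap_eq_of_surjective L.surjective E
    rw [← this]
    exact (LinearEquiv.finrank_map_eq L E').symm
  have hf : Module.finrank ℝ E'ᗮ = n := by
    have h1 := E.finrank_quotient_add_finrank
    have h2 := Submodule.finrank_add_finrank_orthogonal E'
    simp only [Module.finrank_fintype_fun_eq_card, Fintype.card_fin, finrank_euclideanSpace] at h1 h2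
    omega
  have b := stdOrthonormalBasis ℝ E'ᗮ
  rw [hf] at b
  let P := E'ᗮ.starProjection
  let e : Fin m → EuclideanSpace ℝ (Fin m) := fun j => EuclideanSpace.single j 1
  have hnorm : ∀ j, ‖P (e j)‖ ^ 2 = ∑ i, (b i : EuclideanSpace ℝ (Fin m)) j ^ 2 := by
    intro j
    have h1 := b.sum_sq_norm_inner_right (E'ᗮ.orthogonalProjectionOnto (e j))
    have h2 : ‖E'ᗮ.orthogonalProjectionOnto (e j)‖ = ‖P (e j)‖ := rfl
    rw [← h2, ← h1]
    apply Finset.sum_congr rfl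
    intro i _
    rw [Submodule.inner_orthogonalProjectionOnto_eq_of_mem_left]
    simp [e, EuclideanSpace.inner_single_right]
  have hsum : ∑ j, ‖P (e j)‖ ^ 2 = n := by
    simp only [hnorm]
    rw [Finset.sum_comm]
    have : ∀ i, ∑ j, (b i : EuclideanSpace ℝ (Fin m)) j ^ 2 = 1 := by
      intro i
      have h1 : ‖(b i : EuclideanSpace ℝ (Fin m))‖ = 1 := b.orthonormal.1 i
      have h2 := EuclideanSpace.real_norm_sq_eq (b i : EuclideanSpace ℝ (Fin m))
      rw [← h2, h1]; norm_num
    simp [this]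
  have hm' : (0:ℝ) < m := by exact_mod_cast hm
  obtain ⟨j, hj⟩ : ∃ j, ‖P (e j)‖ ^ 2 ≤ n / m := by
    by_contra hc
    push Not at hc
    have : ∑ j : Fin m, (n / m : ℝ) < ∑ j, ‖P (e j)‖ ^ 2 :=
      Finset.sum_lt_sum_of_nonempty ⟨⟨0, hm⟩, Finset.mem_univ _⟩ fun j _ => hc j
    rw [hsum] at this
    simp at this
    field_simp at this
    exact lt_irrefl _ this
  have hw : ‖P (e j)‖ ^ 2 = ∑ i, (P (e j)) i ^ 2 := EuclideanSpace.real_norm_sq_eq _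
  refine ⟨j, fun i => P (e j) i, ?_, ?_, ?_⟩
  · have h1 : e j - P (e j) ∈ E'ᗮᗮ := Submodule.sub_starProjection_mem_orthogonal (K := E'ᗮ) (e j)
    rw [Submodule.orthogonal_orthogonal] at h1
    have h2 : L (e j - P (e j)) ∈ E := h1
    convert h2 using 1
    ext i
    simp [L, e, Pi.single_apply]
  · rw [← hw, ← real_inner_self_eq_norm_sq]
    have h3 : inner ℝ (P (e j)) (P (e j)) = inner ℝ (P (e j)) (e j) := by
      have h1 : e j - P (e j) ∈ E'ᗮᗮ := Submodule.sub_starProjection_mem_orthogonal (K := E'ᗮ) (e j)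
      have h2 : P (e j) ∈ E'ᗮ := Submodule.starProjection_apply_mem _ _
      have := (Submodule.mem_orthogonal _ _).1 h1 _ h2
      rw [inner_sub_right] at this
      linarith
    rw [h3]
    simp [e, EuclideanSpace.inner_single_right]
  · rw [← hw]; exact hj

lemma growth (c C T ρ : ℝ) (hc : 0 < c)
    (h : ∀ n : ℕ, 1 ≤ n → c * (n : ℝ) ^ (-T) ≤ C * (n : ℝ) ^ (-ρ)) : ρ ≤ T := by
  by_contra hcon
  push Not at hcon
  have ht : Filter.Tendsto (fun n : ℕ => (n : ℝ) ^ (ρ - T)) Filter.atTop Filter.atTop :=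
    (tendsto_rpow_atTop (sub_pos.2 hcon)).comp tendsto_natCast_atTop_atTop
  obtain ⟨n, hn, hn1⟩ := ((ht.eventually_gt_atTop (C / c)).and (Filter.eventually_ge_atTop 1)).exists
  have hn0 : (0:ℝ) < n := by exact_mod_cast hn1
  have h1 := h n hn1
  have h2 : (n:ℝ) ^ (-T) = (n:ℝ) ^ (ρ - T) * (n:ℝ) ^ (-ρ) := by
    rw [← Real.rpow_add hn0]; congr 1; ring
  rw [h2, ← mul_assoc] at h1
  have h3 := le_of_mul_le_mul_right h1 (Real.rpow_pos_of_pos hn0 _)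
  rw [div_lt_iff₀ hc] at hn
  linarith

lemma sig_bound {m : ℕ} (lam : ℝ) (hlam : 0 < lam) (j : Fin m) :
    (m : ℝ) ^ (-lam) ≤ ((j : ℕ) + 1 : ℝ) ^ (-lam) := by
  apply Real.rpow_le_rpow_of_nonpos (by positivity) _ (by linarith)
  exact_mod_cast j.2

lemma lower_one (p : ℝ≥0∞) (hp : 1 ≤ p) (lam : ℝ) (hlam : 0 < lam) (n : ℕ) (hn : 1 ≤ n) :
    ((2 * n : ℕ) : ℝ) ^ (-lam) * ((2 * n : ℕ) : ℝ) ^ (-(1 / p.toReal)) * Real.sqrt n ≤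
      minrad p (fun j : Fin (2 * n) => ((j : ℕ) + 1 : ℝ) ^ (-lam)) n := by
  apply le_minrad p hp _ (fun j => by positivity) (by omega) _ (by positivity)
  intro E hE
  have hf : n ≤ Module.finrank ℝ E := by
    have h1 := E.finrank_quotient_add_finrank
    simp only [Module.finrank_fintype_fun_eq_card, Fintype.card_fin] at h1
    omega
  obtain ⟨x, hx, hx1, hx2⟩ := cube_point E hf
  set a : ℝ := ((2 * n : ℕ) : ℝ) ^ (-lam) with ha
  set b : ℝ := ((2 * n : ℕ) : ℝ) ^ (-(1 / p.toReal)) with hb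
  have hN : (0:ℝ) < ((2 * n : ℕ) : ℝ) := by
    have : 0 < 2 * n := by omega
    exact_mod_cast this
  have ha0 : 0 < a := Real.rpow_pos_of_pos hN _
  have hb0 : 0 < b := Real.rpow_pos_of_pos hN _
  have hcoord : ∀ j : Fin (2 * n), |((a * b) • x) j / ((j : ℕ) + 1 : ℝ) ^ (-lam)| ≤ b := by
    intro j
    have h1 := sig_bound lam hlam j
    rw [← ha] at h1
    have h2 : (0:ℝ) < ((j : ℕ) + 1 : ℝ) ^ (-lam) := by positivity
    rw [abs_div, abs_of_pos h2, div_le_iff₀ h2]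
    simp only [Pi.smul_apply, smul_eq_mul, abs_mul, abs_of_pos ha0, abs_of_pos hb0]
    calc a * b * |x j| ≤ a * b * 1 := by gcongr; exact hx1 j
      _ = b * a := by ring
      _ ≤ _ := by gcongr
  refine ⟨(a * b) • x, E.smul_mem _ hx, ?_, ?_⟩
  · by_cases hp' : p = ∞
    · subst hp'
      rw [mem_ellipsoid_top]
      intro j
      refine (hcoord j).trans ?_
      simp [hb]
    · rw [mem_ellipsoid_fin p hp hp']
      have h0 : 0 < p.toReal := ENNReal.toReal_pos (by rintro rfl; simp at hp) hp'
      calc _ ≤ ∑ j : Fin (2 * n), b ^ p.toReal := by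
            apply Finset.sum_le_sum
            intro j _
            exact Real.rpow_le_rpow (abs_nonneg _) (hcoord j) h0.le
        _ = ((2 * n : ℕ) : ℝ) * b ^ p.toReal := by simp
        _ = 1 := by
            rw [hb, ← Real.rpow_mul hN.le]
            have : -(1 / p.toReal) * p.toReal = -1 := by field_simp
            rw [this, Real.rpow_neg_one, mul_inv_cancel₀ hN.ne']
        _ ≤ 1 := le_rfl
  · simp only [Pi.smul_apply, smul_eq_mul, mul_pow, Real.sq_sqrt (Nat.cast_nonneg n)]
    rw [← Finset.mul_sum]
    gcongr

lemma upper_rho_one (p : ℝ≥0∞) (hp : 1 ≤ p) (lam : ℝ) (hlam : 0 < lam) (ρ C : ℝ)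
    (h : ∀ (m n : ℕ), 1 ≤ n → n < m →
        minrad p (fun j : Fin m => ((j : ℕ) + 1 : ℝ) ^ (-lam)) n ≤ C * (n : ℝ) ^ (-ρ)) :
    ρ ≤ lam + 1 / p.toReal - 1 / 2 := by
  apply growth ((2:ℝ) ^ (-lam) * (2:ℝ) ^ (-(1 / p.toReal))) C _ _ (by positivity)
  intro n hn
  have hn0 : (0:ℝ) < n := by exact_mod_cast hn
  refine le_trans (le_of_eq ?_) ((lower_one p hp lam hlam n hn).trans (h (2 * n) n hn (by omega)))
  push_cast
  rw [Real.mul_rpow (by norm_num) hn0.le, Real.mul_rpow (by norm_num) hn0.le, Real.sqrt_eq_rpow]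
  have : (n:ℝ) ^ (-(lam + 1 / p.toReal - 1 / 2)) =
      (n:ℝ) ^ (-lam) * (n:ℝ) ^ (-(1 / p.toReal)) * (n:ℝ) ^ ((1:ℝ)/2) := by
    rw [← Real.rpow_add hn0, ← Real.rpow_add hn0]; congr 1; ring
  rw [this]; ring

lemma pow_split (P a w : ℝ) (hP2 : P ≤ 2) (hP : 0 < P) (ha : 0 < a) :
    |w| ^ P ≤ a ^ P + a ^ (P - 2) * w ^ 2 := by
  rcases le_total |w| a with h | h
  · have h1 : |w| ^ P ≤ a ^ P := Real.rpow_le_rpow (abs_nonneg _) h hP.le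
    have h2 : 0 ≤ a ^ (P - 2) * w ^ 2 := by positivity
    linarith
  · have hw : 0 < |w| := ha.trans_le h
    have h1 : |w| ^ P = |w| ^ (P - 2) * w ^ 2 := by
      rw [← sq_abs w, ← Real.rpow_natCast, ← Real.rpow_add hw]; congr 1; push_cast; ring
    have h2 : |w| ^ (P - 2) ≤ a ^ (P - 2) :=
      Real.rpow_le_rpow_of_nonpos ha h (by linarith)
    have h3 : 0 ≤ a ^ P := by positivity
    rw [h1]
    have := mul_le_mul_of_nonneg_right h2 (sq_nonneg w)
    linarith

lemma lower_two (p : ℝ≥0∞) (hp : 1 ≤ p) (hp2 : p < 2) (lam : ℝ) (hlam : 0 < lam) (m n : ℕ)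
    (hn : 1 ≤ n) (hmn : 2 * n ≤ m) (hm : (n : ℝ) ≤ (m : ℝ) ^ (2 * (1 - 1 / p.toReal))) :
    (m : ℝ) ^ (-lam) / 6 ≤ minrad p (fun j : Fin m => ((j : ℕ) + 1 : ℝ) ^ (-lam)) n := by
  have hp' : p ≠ ∞ := (hp2.trans (by norm_num)).ne
  have hP1 : 1 ≤ p.toReal := by
    have := ENNReal.toReal_mono hp' hp
    simpa using this
  have hP2 : p.toReal ≤ 2 := by
    have := ENNReal.toReal_mono (by norm_num) hp2.le
    simpa using this
  apply le_minrad p hp _ (fun j => by positivity) (by omega) _ (by positivity)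
  intro E hE
  set P := p.toReal with hPdef
  have hm0 : 0 < m := by omega
  have hmR : (0:ℝ) < m := by exact_mod_cast hm0
  obtain ⟨j, w, hwE, hwj, hw⟩ := proj_point hm0 E hE
  set W := ∑ i, w i ^ 2 with hW
  have hW0 : 0 ≤ W := Finset.sum_nonneg fun _ _ => sq_nonneg _
  have hW2 : W ≤ 1 / 2 := by
    refine hw.trans ?_
    rw [div_le_iff₀ hmR]
    have : (2 * n : ℝ) ≤ m := by exact_mod_cast hmn
    linarith
  set x : Fin m → ℝ := Pi.single j 1 - w with hx
  have hsx : ∑ i, |x i| ^ P ≤ 3 := by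
    have h1 : ∀ i, |x i| ^ P ≤ (if i = j then 1 else 0) + |w i| ^ P := by
      intro i
      by_cases hi : i = j
      · subst hi
        have h2 : |x i| ≤ 1 := by
          simp only [hx, Pi.sub_apply, Pi.single_eq_same, hwj]
          rw [abs_le]; constructor <;> linarith
        have h3 : |x i| ^ P ≤ 1 := Real.rpow_le_one (abs_nonneg _) h2 (by linarith)
        have h4 : 0 ≤ |w i| ^ P := by positivity
        simp only [if_true]; linarith
      · simp [hx, hi]
    have h2 : ∑ i, |w i| ^ P ≤ 2 := by
      set a : ℝ := (m:ℝ) ^ (-(1 / P)) with ha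
      have ha0 : 0 < a := Real.rpow_pos_of_pos hmR _
      calc ∑ i, |w i| ^ P ≤ ∑ i, (a ^ P + a ^ (P - 2) * w i ^ 2) :=
            Finset.sum_le_sum fun i _ => pow_split P a (w i) hP2 (by linarith) ha0
        _ = m * a ^ P + a ^ (P - 2) * W := by
            rw [Finset.sum_add_distrib, ← Finset.mul_sum]; simp [hW]
        _ ≤ m * a ^ P + a ^ (P - 2) * ((m : ℝ) ^ (2 * (1 - 1 / P)) / m) := by
            gcongr
            exact hw.trans (by gcongr)
        _ = 2 := by
            have e1 : a ^ P = (m:ℝ)⁻¹ := by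
              rw [ha, ← Real.rpow_mul hmR.le, ← Real.rpow_neg_one]
              congr 1; field_simp
            have e2 : a ^ (P - 2) * ((m : ℝ) ^ (2 * (1 - 1 / P)) / m) = 1 := by
              rw [ha, ← Real.rpow_mul hmR.le, ← mul_div_assoc, ← Real.rpow_add hmR]
              have : -(1 / P) * (P - 2) + 2 * (1 - 1 / P) = 1 := by field_simp; ring
              rw [this, Real.rpow_one, div_self hmR.ne']
            rw [e1, e2, mul_inv_cancel₀ hmR.ne']; norm_num
    calc ∑ i, |x i| ^ P ≤ ∑ i, ((if i = j then 1 else 0) + |w i| ^ P) :=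
          Finset.sum_le_sum fun i _ => h1 i
      _ = 1 + ∑ i, |w i| ^ P := by rw [Finset.sum_add_distrib]; simp
      _ ≤ 3 := by linarith
  have hx2 : 1 / 2 ≤ ∑ i, x i ^ 2 := by
    have h1 : ∀ i, x i ^ 2 = (if i = j then 1 - 2 * w i else 0) + w i ^ 2 := by
      intro i
      by_cases hi : i = j
      · subst hi; simp [hx]; ring
      · simp [hx, hi]
    simp only [h1, Finset.sum_add_distrib, Finset.sum_ite_eq', Finset.mem_univ, if_true]
    rw [hwj]; linarith
  set a : ℝ := (m:ℝ) ^ (-lam) with ha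
  have ha0 : 0 < a := Real.rpow_pos_of_pos hmR _
  refine ⟨(a / 3) • x, E.smul_mem _ hwE, ?_, ?_⟩
  · rw [mem_ellipsoid_fin p hp hp']
    calc _ ≤ ∑ i : Fin m, (1 / 3) * |x i| ^ P := by
          apply Finset.sum_le_sum
          intro i _
          have h1 := sig_bound lam hlam i
          rw [← ha] at h1
          have h2 : (0:ℝ) < ((i : ℕ) + 1 : ℝ) ^ (-lam) := by positivity
          have h3 : |((a / 3) • x) i / ((i : ℕ) + 1 : ℝ) ^ (-lam)| ≤ 1 / 3 * |x i| := by
            rw [abs_div, abs_of_pos h2, div_le_iff₀ h2]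
            simp only [Pi.smul_apply, smul_eq_mul, abs_mul, abs_of_pos (show 0 < a / 3 by positivity)]
            calc a / 3 * |x i| = 1 / 3 * |x i| * a := by ring
              _ ≤ _ := by gcongr
          refine (Real.rpow_le_rpow (abs_nonneg _) h3 (by linarith)).trans ?_
          rw [Real.mul_rpow (by norm_num) (abs_nonneg _)]
          gcongr
          exact Real.rpow_le_self_of_le_one (by norm_num) (by norm_num) hP1
      _ ≤ 1 := by rw [← Finset.mul_sum]; linarith
  · simp only [Pi.smul_apply, smul_eq_mul, mul_pow]
    rw [← Finset.mul_sum]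
    have : 0 < a ^ 2 := by positivity
    nlinarith

lemma upper_rho_two (p : ℝ≥0∞) (hp : 1 ≤ p) (hp2 : p < 2) (lam : ℝ) (hlam : 0 < lam)
    (hl : lam < 1 - 1 / p.toReal) (ρ C : ℝ)
    (h : ∀ (m n : ℕ), 1 ≤ n → n < m →
        minrad p (fun j : Fin m => ((j : ℕ) + 1 : ℝ) ^ (-lam)) n ≤ C * (n : ℝ) ^ (-ρ)) :
    ρ ≤ lam * pstar p / 2 := by
  have hp' : p ≠ ∞ := (hp2.trans (by norm_num)).ne
  have hP1 : 1 ≤ p.toReal := by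
    have := ENNReal.toReal_mono hp' hp
    simpa using this
  have hP2 : p.toReal ≤ 2 := by
    have := ENNReal.toReal_mono (by norm_num) hp2.le
    simpa using this
  set β := 1 - 1 / p.toReal with hβ
  have hβ0 : 0 < β := hlam.trans hl
  have hβ2 : β ≤ 1 / 2 := by
    have : 1 / 2 ≤ 1 / p.toReal := one_div_le_one_div_of_le (by linarith) hP2
    linarith
  have hps : pstar p = β⁻¹ := rfl
  rw [hps]
  set K := 1 / (2 * β) with hK
  have hK1 : 1 ≤ K := by
    rw [hK, le_div_iff₀ (by positivity)]; linarith
  have hT : lam * β⁻¹ / 2 = lam * K := by rw [hK]; field_simp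
  rw [hT]
  apply growth ((3:ℝ) ^ (-lam) / 6) C _ _ (by positivity)
  intro n hn
  have hn0 : (0:ℝ) < n := by exact_mod_cast hn
  have hn1 : (1:ℝ) ≤ n := by exact_mod_cast hn
  set m := ⌈2 * (n:ℝ) ^ K⌉₊ with hm
  have hnK : (n:ℝ) ≤ (n:ℝ) ^ K := by
    conv_lhs => rw [← Real.rpow_one (n:ℝ)]
    exact Real.rpow_le_rpow_of_exponent_le hn1 hK1
  have hm1 : 2 * (n:ℝ) ^ K ≤ m := Nat.le_ceil _
  have hm2 : (m:ℝ) ≤ 3 * (n:ℝ) ^ K := by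
    have := (Nat.ceil_lt_add_one (show 0 ≤ 2 * (n:ℝ) ^ K by positivity)).le
    linarith
  have hmn : 2 * n ≤ m := by
    have : (2 * n : ℝ) ≤ m := by linarith
    exact_mod_cast this
  have hm3 : (n : ℝ) ≤ (m : ℝ) ^ (2 * β) := by
    calc (n:ℝ) = ((n:ℝ) ^ K) ^ (2 * β) := by
          rw [← Real.rpow_mul hn0.le, hK, one_div_mul_cancel (by positivity), Real.rpow_one]
      _ ≤ _ := by
          apply Real.rpow_le_rpow (by positivity) _ (by positivity)
          have : 0 < (n:ℝ) ^ K := by positivity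
          linarith
  refine le_trans ?_ ((lower_two p hp hp2 lam hlam m n hn hmn hm3).trans (h m n hn (by omega)))
  have h1 : (3 * (n:ℝ) ^ K) ^ (-lam) ≤ (m:ℝ) ^ (-lam) :=
    Real.rpow_le_rpow_of_nonpos (by positivity) hm2 (by linarith)
  rw [Real.mul_rpow (by norm_num) (by positivity), ← Real.rpow_mul hn0.le] at h1
  have : K * -lam = -(lam * K) := by ring
  rw [this] at h1
  linarith

lemma zsum (δ : ℝ) (hδ : 0 < δ) : ∃ C : ℝ, 0 < C ∧ ∀ m : ℕ,
    ∑ j : Fin m, ((j : ℕ) + 1 : ℝ) ^ (-1 - δ) ≤ C := by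
  have h1 : Summable fun j : ℕ => ((j : ℝ) + 1) ^ (-1 - δ) := by
    have := (Real.summable_nat_rpow (p := -1 - δ)).2 (by linarith)
    have := (summable_nat_add_iff 1).2 this
    simpa using this
  refine ⟨1 + ∑' j : ℕ, ((j : ℝ) + 1) ^ (-1 - δ), ?_, ?_⟩
  · have : 0 ≤ ∑' j : ℕ, ((j : ℝ) + 1) ^ (-1 - δ) := tsum_nonneg fun j => by positivity
    linarith
  · intro m
    rw [Fin.sum_univ_eq_sum_range (fun j : ℕ => ((j : ℝ) + 1) ^ (-1 - δ)) m]
    have := h1.sum_le_tsum (Finset.range m) (fun j _ => by positivity)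
    linarith

lemma young_pt (r δ a y : ℝ) (hr : 1 ≤ r) (hδ : 0 < δ) (ha : 0 ≤ a) (hy : 1 ≤ y) :
    a * y ^ (-(1 - 1 / r) - δ) ≤ a ^ r + y ^ (-1 - δ) := by
  have hy0 : 0 < y := by linarith
  rcases le_total a (y ^ (-(1 / r))) with h | h
  · have h1 : a * y ^ (-(1 - 1 / r) - δ) ≤ y ^ (-(1 / r)) * y ^ (-(1 - 1 / r) - δ) := by gcongr
    rw [← Real.rpow_add hy0] at h1
    have h2 : -(1 / r) + (-(1 - 1 / r) - δ) = -1 - δ := by ring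
    rw [h2] at h1
    have : 0 ≤ a ^ r := by positivity
    linarith
  · have ha0 : 0 < a := (Real.rpow_pos_of_pos hy0 _).trans_le h
    have h1 : a = a ^ r * a ^ (1 - r) := by
      rw [← Real.rpow_add ha0]; simp
    have h2 : a ^ (1 - r) ≤ (y ^ (-(1 / r))) ^ (1 - r) :=
      Real.rpow_le_rpow_of_nonpos (by positivity) h (by linarith)
    rw [← Real.rpow_mul hy0.le] at h2
    have h3 : a * y ^ (-(1 - 1 / r) - δ) ≤ a ^ r := by
      calc a * y ^ (-(1 - 1 / r) - δ) = a ^ r * (a ^ (1 - r) * y ^ (-(1 - 1 / r) - δ)) := by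
            conv_lhs => rw [h1]
            ring
        _ ≤ a ^ r * (y ^ (-(1 / r) * (1 - r)) * y ^ (-(1 - 1 / r) - δ)) := by gcongr
        _ = a ^ r * y ^ (-δ) := by
            rw [← Real.rpow_add hy0]; congr 2; field_simp; ring
        _ ≤ a ^ r * 1 := by
            gcongr
            exact Real.rpow_le_one_of_one_le_of_nonpos hy (by linarith)
        _ = a ^ r := mul_one _
    have : 0 ≤ y ^ (-1 - δ) := by positivity
    linarith

lemma holderish (r δ : ℝ) (hr : 1 ≤ r) (hδ : 0 < δ) : ∃ C : ℝ, 0 < C ∧ ∀ (m : ℕ) (a : Fin m → ℝ),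
    (∀ j, 0 ≤ a j) → ∑ j, a j ^ r ≤ 1 →
    ∑ j : Fin m, a j * ((j : ℕ) + 1 : ℝ) ^ (-(1 - 1 / r) - δ) ≤ C := by
  obtain ⟨C, hC, h⟩ := zsum δ hδ
  refine ⟨1 + C, by linarith, fun m a ha ha1 => ?_⟩
  calc _ ≤ ∑ j : Fin m, (a j ^ r + ((j : ℕ) + 1 : ℝ) ^ (-1 - δ)) := by
        apply Finset.sum_le_sum
        intro j _
        exact young_pt r δ (a j) _ hr hδ (ha j) (by
          have : (0:ℝ) ≤ (j : ℕ) := Nat.cast_nonneg _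
          linarith)
    _ ≤ 1 + C := by
        rw [Finset.sum_add_distrib]
        linarith [h m]

lemma codim_ker {m : ℕ} {κ : Type*} [Fintype κ] (φ : (Fin m → ℝ) →ₗ[ℝ] (κ → ℝ)) :
    Module.finrank ℝ ((Fin m → ℝ) ⧸ LinearMap.ker φ) ≤ Fintype.card κ := by
  rw [φ.quotKerEquivRange.finrank_eq]
  refine (Submodule.finrank_le _).trans ?_
  simp

lemma x_eq {y lam x : ℝ} (hy : 0 < y) : x = x / y ^ (-lam) * y ^ (-lam) := by
  rw [div_mul_cancel₀]
  positivity

lemma holder_ge_two (p : ℝ≥0∞) (hp : 2 ≤ p) (δ : ℝ) (hδ : 0 < δ) :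
    ∃ C : ℝ, 0 < C ∧ ∀ (m : ℕ) (σ x : Fin m → ℝ), x ∈ ellipsoid p σ →
      ∑ j : Fin m, (x j / σ j) ^ 2 * ((j : ℕ) + 1 : ℝ) ^ (-(1 - 2 / p.toReal) - δ) ≤ C := by
  have hp1 : 1 ≤ p := le_trans (by norm_num) hp
  by_cases hp' : p = ∞
  · subst hp'
    obtain ⟨C, hC, h⟩ := zsum δ hδ
    refine ⟨C, hC, fun m σ x hx => le_trans ?_ (h m)⟩
    rw [mem_ellipsoid_top] at hx
    apply Finset.sum_le_sum
    intro j _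
    have h1 : (x j / σ j) ^ 2 ≤ 1 := by
      rw [← sq_abs]; exact pow_le_one₀ (abs_nonneg _) (hx j)
    simp only [ENNReal.toReal_top, div_zero, sub_zero]
    have : (0:ℝ) ≤ ((j : ℕ) + 1 : ℝ) ^ (-1 - δ) := by positivity
    nlinarith
  · have hP2 : 2 ≤ p.toReal := by
      have := ENNReal.toReal_mono hp' hp
      simpa using this
    obtain ⟨C, hC, h⟩ := holderish (p.toReal / 2) δ (by linarith) hδ
    refine ⟨C, hC, fun m σ x hx => ?_⟩
    rw [mem_ellipsoid_fin p hp1 hp'] at hx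
    have := h m (fun j => (x j / σ j) ^ 2) (fun j => sq_nonneg _) (by
      refine le_trans (le_of_eq ?_) hx
      apply Finset.sum_congr rfl
      intro j _
      rw [← sq_abs, ← Real.rpow_natCast, ← Real.rpow_mul (abs_nonneg _)]
      congr 1; push_cast; ring)
    simpa using this

lemma lower_rho_ge_two (p : ℝ≥0∞) (hp : 2 ≤ p) (lam : ℝ) (ρ : ℝ) (hρ0 : 0 ≤ ρ)
    (hρ : ρ < lam + 1 / p.toReal - 1 / 2) :
    ∃ C : ℝ, 0 < C ∧ ∀ (m n : ℕ), 1 ≤ n → n < m →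
        minrad p (fun j : Fin m => ((j : ℕ) + 1 : ℝ) ^ (-lam)) n ≤ C * (n : ℝ) ^ (-ρ) := by
  obtain ⟨C, hC, h⟩ := holder_ge_two p hp (2 * (lam + 1 / p.toReal - 1 / 2 - ρ)) (by linarith)
  refine ⟨Real.sqrt C, Real.sqrt_pos.2 hC, fun m n hn hnm => ?_⟩
  have hn0 : (0:ℝ) < n := by exact_mod_cast hn
  let φ : (Fin m → ℝ) →ₗ[ℝ] (Fin n → ℝ) :=
    { toFun := fun v i => v ⟨i, by omega⟩
      map_add' := fun _ _ => rfl
      map_smul' := fun _ _ => rfl }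
  apply minrad_le p _ hnm.le (LinearMap.ker φ) (by simpa using codim_ker φ) _ (by positivity)
  intro x hx hxe
  have hx0 : ∀ j : Fin m, (j : ℕ) < n → x j = 0 := by
    intro j hj
    exact congrFun (LinearMap.mem_ker.1 hx) ⟨j, hj⟩
  have h1 := h m _ x hxe
  rw [mul_pow, Real.sq_sqrt hC.le, ← Real.rpow_natCast, ← Real.rpow_mul hn0.le]
  refine le_trans ?_ (mul_le_mul_of_nonneg_right h1 (by positivity))
  rw [Finset.sum_mul]
  apply Finset.sum_le_sum
  intro j _
  rcases lt_or_ge (j : ℕ) n with hj | hj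
  · simp [hx0 j hj]
  · have hy : (0:ℝ) < ((j : ℕ) + 1 : ℝ) := by positivity
    have hyn : (n:ℝ) ≤ ((j : ℕ) + 1 : ℝ) := by
      have : (n:ℝ) ≤ (j : ℕ) := by exact_mod_cast hj
      linarith
    set y := ((j : ℕ) + 1 : ℝ) with hyd
    have e1 : x j ^ 2 = (x j / y ^ (-lam)) ^ 2 * (y ^ (-(1 - 2 / p.toReal) -
        2 * (lam + 1 / p.toReal - 1 / 2 - ρ)) * y ^ (-ρ * 2)) := by
      conv_lhs => rw [x_eq (x := x j) (lam := lam) hy]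
      rw [mul_pow, ← Real.rpow_add hy, ← Real.rpow_natCast, ← Real.rpow_natCast, ← Real.rpow_mul hy.le]
      congr 2; push_cast; ring
    rw [e1, mul_assoc]
    gcongr
    push_cast
    exact Real.rpow_le_rpow_of_nonpos hn0 hyn (by linarith)

lemma ev_k (K d : ℝ) (hd : 0 < d) (hd1 : d < 1) :
    ∃ n0 : ℕ, ∀ n n2 : ℕ, n0 ≤ n → 1 ≤ n → (n : ℝ) / 2 ≤ n2 →
      (4 * (n:ℝ) ^ K) ^ ⌈(n:ℝ) ^ (1 - d)⌉₊ * (10 / 11) ^ n2 < 1 := by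
  have hc : 0 < Real.log (11 / 10) := Real.log_pos (by norm_num)
  set c := Real.log (11 / 10) with hcd
  have hlo : (fun x : ℝ => Real.log 4 + K * Real.log x) =o[Filter.atTop] fun x : ℝ => x ^ d := by
    apply Asymptotics.IsLittleO.add
    · apply Asymptotics.isLittleO_const_left.2
      right
      exact tendsto_norm_atTop_atTop.comp (tendsto_rpow_atTop hd)
    · exact (isLittleO_log_rpow_atTop hd).const_mul_left K
  have h1 := (hlo.bound (show 0 < c / 8 by positivity))
  have h2 := tendsto_natCast_atTop_atTop (R := ℝ) |>.eventually h1
  obtain ⟨n0, hn0⟩ := Filter.eventually_atTop.1 h2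
  refine ⟨n0, fun n n2 hn hn1 hn2 => ?_⟩
  have hnp : (0:ℝ) < n := by exact_mod_cast hn1
  have hn1' : (1:ℝ) ≤ n := by exact_mod_cast hn1
  have h3 := hn0 n hn
  rw [Real.norm_eq_abs, Real.norm_eq_abs, abs_of_pos (show 0 < (n:ℝ) ^ d by positivity)] at h3
  have h4 := (le_abs_self _).trans h3
  set k := ⌈(n:ℝ) ^ (1 - d)⌉₊ with hk
  have hk2 : (k : ℝ) ≤ 2 * (n:ℝ) ^ (1 - d) := by
    have := (Nat.ceil_lt_add_one (show 0 ≤ (n:ℝ) ^ (1 - d) by positivity)).le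
    have h5 : 1 ≤ (n:ℝ) ^ (1 - d) := Real.one_le_rpow hn1' (by linarith)
    linarith
  have e1 : (4 * (n:ℝ) ^ K) ^ k = Real.exp (k * (Real.log 4 + K * Real.log n)) := by
    rw [Real.exp_nat_mul, Real.exp_add, Real.exp_log (by norm_num), Real.rpow_def_of_pos hnp, mul_comm K]
  have e2 : ((10:ℝ) / 11) ^ n2 = Real.exp (n2 * (-c)) := by
    rw [Real.exp_nat_mul, Real.exp_neg, hcd, Real.exp_log (by norm_num)]; norm_num
  rw [e1, e2, ← Real.exp_add, Real.exp_lt_one_iff]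
  have h6 : (k:ℝ) * (Real.log 4 + K * Real.log n) ≤ c / 4 * n := by
    calc (k:ℝ) * (Real.log 4 + K * Real.log n) ≤ k * (c / 8 * (n:ℝ) ^ d) := by gcongr
      _ ≤ (2 * (n:ℝ) ^ (1 - d)) * (c / 8 * (n:ℝ) ^ d) := by gcongr
      _ = c / 4 * ((n:ℝ) ^ (1 - d) * (n:ℝ) ^ d) := by ring
      _ = c / 4 * n := by rw [← Real.rpow_add hnp]; simp
  nlinarith

lemma upper_step (p : ℝ≥0∞) (hp : 1 ≤ p) (hp2 : p < 2) (lam : ℝ) (hlam : 0 < lam)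
    (δ C1 : ℝ) (hδ : 0 < δ) (hC1 : ∀ (m : ℕ) (a : Fin m → ℝ),
    (∀ j, 0 ≤ a j) → ∑ j, a j ^ p.toReal ≤ 1 →
    ∑ j : Fin m, a j * ((j : ℕ) + 1 : ℝ) ^ (-(1 - 1 / p.toReal) - δ) ≤ C1)
    (m n k M : ℕ) (hn : 1 ≤ n) (hnm : n < m) (hk : 0 < k) (G : ℝ) (hG0 : 0 ≤ G)
    (hM : (2 * (M : ℝ)) ^ k * (10 / 11) ^ (n - n / 2) < 1) (hM0 : 0 < M)
    (hG : ∀ y : ℝ, (n:ℝ) / 2 ≤ y → y ≤ M → y ^ (1 - 1 / p.toReal - lam + δ) ≤ G) :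
    ∃ E : Submodule ℝ (Fin m → ℝ), Module.finrank ℝ ((Fin m → ℝ) ⧸ E) ≤ n ∧
      ∀ x ∈ E, x ∈ ellipsoid p (fun j : Fin m => ((j : ℕ) + 1 : ℝ) ^ (-lam)) →
        ∑ j, x j ^ 2 ≤ 16 * (G * C1) ^ 2 / k + (M : ℝ) ^ (-2 * lam) := by
  have hp' : p ≠ ∞ := (hp2.trans (by norm_num)).ne
  have hP1 : 1 ≤ p.toReal := by
    have := ENNReal.toReal_mono hp' hp
    simpa using this
  have hP2 : p.toReal ≤ 2 := by
    have := ENNReal.toReal_mono (by norm_num) hp2.le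
    simpa using this
  have hk' : (0:ℝ) < k := by exact_mod_cast hk
  have hM' : (0:ℝ) < M := by exact_mod_cast hM0
  set S : Finset (Fin m) := Finset.univ.filter fun j => n / 2 ≤ (j : ℕ) ∧ (j : ℕ) + 1 ≤ M with hS
  have hcard : Fintype.card S ≤ M := by
    rw [← Fintype.card_fin M]
    apply Fintype.card_le_of_injective
      (fun j : S => (⟨(j : Fin m), by
        have := (Finset.mem_filter.1 j.2).2.2
        omega⟩ : Fin M))
    intro a b hab
    have : ((a : Fin m) : ℕ) = ((b : Fin m) : ℕ) := congrArg (fun z : Fin M => z.val) hab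
    exact Subtype.ext (Fin.ext this)
  obtain ⟨A, hA⟩ := l1_ker (ι := S) (n - n / 2) k (by omega) hk (by
    refine lt_of_le_of_lt ?_ hM
    gcongr)
  let φ : (Fin m → ℝ) →ₗ[ℝ] (Fin (n / 2) ⊕ Fin (n - n / 2) → ℝ) :=
    { toFun := fun v => Sum.elim (fun i => v ⟨i, by omega⟩) (fun i => ∑ j : S, A i j * v j)
      map_add' := by
        intro v w
        ext (i | i)
        · simp
        · simp [mul_add, Finset.sum_add_distrib]
      map_smul' := by
        intro c v
        ext (i | i)
        · simp
        · simp only [Sum.elim_inr, Pi.smul_apply, smul_eq_mul, RingHom.id_apply, Finset.mul_sum]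
          apply Finset.sum_congr rfl
          intro j _; ring }
  refine ⟨LinearMap.ker φ, ?_, ?_⟩
  · refine (codim_ker φ).trans ?_
    simp only [Fintype.card_sum, Fintype.card_fin]
    omega
  intro x hx hxe
  have hxφ := LinearMap.mem_ker.1 hx
  have hx0 : ∀ j : Fin m, (j : ℕ) < n / 2 → x j = 0 := by
    intro j hj
    exact congrFun hxφ (Sum.inl ⟨j, hj⟩)
  have hxA := hA (fun j : S => x j) (fun i => congrFun hxφ (Sum.inr i))
  have hab := mem_ellipsoid_abs p hp _ x hxe
  rw [mem_ellipsoid_fin p hp hp'] at hxe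
  have hS1 : ∑ j : S, x j ^ 2 = ∑ j ∈ S, x j ^ 2 := Finset.sum_coe_sort S (fun j => x j ^ 2)
  have hS2 : ∑ j : S, |x j| = ∑ j ∈ S, |x j| := Finset.sum_coe_sort S (fun j => |x j|)
  rw [hS1, hS2] at hxA
  set u : Fin m → ℝ := fun j => |x j / ((j : ℕ) + 1 : ℝ) ^ (-lam)| with hu
  have hu0 : ∀ j, 0 ≤ u j := fun j => abs_nonneg _
  have hux : ∀ j : Fin m, |x j| = u j * ((j : ℕ) + 1 : ℝ) ^ (-lam) := by
    intro j
    have hy : (0:ℝ) < ((j : ℕ) + 1 : ℝ) := by positivity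
    have h2 : (0:ℝ) < ((j : ℕ) + 1 : ℝ) ^ (-lam) := by positivity
    simp only [hu]
    rw [abs_div, abs_of_pos h2, div_mul_cancel₀ _ h2.ne']
  have hH : ∑ j ∈ S, |x j| ≤ G * C1 := by
    have hrange : ∀ j ∈ S, (n:ℝ) / 2 ≤ ((j : ℕ) + 1 : ℝ) ∧ ((j : ℕ) + 1 : ℝ) ≤ M := by
      intro j hj
      have h1 := (Finset.mem_filter.1 hj).2
      constructor
      · have : n ≤ 2 * ((j : ℕ) + 1) := by omega
        have : (n : ℝ) ≤ 2 * ((j : ℕ) + 1) := by exact_mod_cast this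
        linarith
      · exact_mod_cast h1.2
    calc ∑ j ∈ S, |x j| ≤ ∑ j ∈ S, G * (u j * ((j : ℕ) + 1 : ℝ) ^ (-(1 - 1 / p.toReal) - δ)) := by
          apply Finset.sum_le_sum
          intro j hj
          have hy : (0:ℝ) < ((j : ℕ) + 1 : ℝ) := by positivity
          have h1 := hG _ (hrange j hj).1 (hrange j hj).2
          have e1 : ((j : ℕ) + 1 : ℝ) ^ (-lam) = ((j : ℕ) + 1 : ℝ) ^ (1 - 1 / p.toReal - lam + δ) *
              ((j : ℕ) + 1 : ℝ) ^ (-(1 - 1 / p.toReal) - δ) := by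
            rw [← Real.rpow_add hy]; congr 1; ring
          rw [hux j, e1]
          calc _ = ((j : ℕ) + 1 : ℝ) ^ (1 - 1 / p.toReal - lam + δ) * (u j *
              ((j : ℕ) + 1 : ℝ) ^ (-(1 - 1 / p.toReal) - δ)) := by ring
            _ ≤ _ := by
              apply mul_le_mul_of_nonneg_right h1
              have := hu0 j
              positivity
      _ = G * ∑ j ∈ S, u j * ((j : ℕ) + 1 : ℝ) ^ (-(1 - 1 / p.toReal) - δ) := by
          rw [Finset.mul_sum]
      _ ≤ G * C1 := by
          apply mul_le_mul_of_nonneg_left _ hG0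
          refine le_trans ?_ (hC1 m u hu0 hxe)
          apply Finset.sum_le_sum_of_subset_of_nonneg (Finset.subset_univ _)
          intro j _ _
          have := hu0 j
          positivity
  have hhead : ∑ j ∈ S, x j ^ 2 ≤ 16 * (G * C1) ^ 2 / k := by
    rw [le_div_iff₀ hk']
    have h0 : 0 ≤ ∑ j ∈ S, |x j| := Finset.sum_nonneg fun _ _ => abs_nonneg _
    have : (∑ j ∈ S, |x j|) ^ 2 ≤ (G * C1) ^ 2 := by gcongr
    linarith
  have htail : ∑ j ∈ Sᶜ, x j ^ 2 ≤ (M : ℝ) ^ (-2 * lam) := by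
    calc ∑ j ∈ Sᶜ, x j ^ 2 ≤ ∑ j ∈ Sᶜ, (M : ℝ) ^ (-2 * lam) * u j ^ p.toReal := by
          apply Finset.sum_le_sum
          intro j hj
          have hy : (0:ℝ) < ((j : ℕ) + 1 : ℝ) := by positivity
          have hr : 0 ≤ (M : ℝ) ^ (-2 * lam) * u j ^ p.toReal := by
            have := hu0 j
            positivity
          rcases lt_or_ge (j : ℕ) (n / 2) with h | h
          · rw [hx0 j h]; simpa using hr
          · have hMj : M ≤ (j : ℕ) + 1 := by
              by_contra hcon
              push Not at hcon
              have : j ∈ S := by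
                rw [hS, Finset.mem_filter]
                exact ⟨Finset.mem_univ _, h, hcon.le⟩
              exact (Finset.mem_compl.1 hj) this
            have hMj' : (M:ℝ) ≤ ((j : ℕ) + 1 : ℝ) := by exact_mod_cast hMj
            rw [← sq_abs, hux j, mul_pow, mul_comm]
            have e1 : (((j : ℕ) + 1 : ℝ) ^ (-lam)) ^ 2 = ((j : ℕ) + 1 : ℝ) ^ (-2 * lam) := by
              rw [← Real.rpow_natCast, ← Real.rpow_mul hy.le]; congr 1; push_cast; ring
            rw [e1]
            have e2 : u j ^ 2 ≤ u j ^ p.toReal := by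
              rw [← Real.rpow_natCast]
              rcases (hu0 j).eq_or_lt with h0 | h0
              · rw [← h0, Real.zero_rpow (by norm_num), Real.zero_rpow (by linarith)]
              · exact Real.rpow_le_rpow_of_exponent_ge h0 (hab j) (by push_cast; exact hP2)
            have e3 : ((j : ℕ) + 1 : ℝ) ^ (-2 * lam) ≤ (M : ℝ) ^ (-2 * lam) :=
              Real.rpow_le_rpow_of_nonpos hM' hMj' (by linarith)
            exact mul_le_mul e3 e2 (sq_nonneg _) (by positivity)
      _ = (M : ℝ) ^ (-2 * lam) * ∑ j ∈ Sᶜ, u j ^ p.toReal := by rw [Finset.mul_sum]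
      _ ≤ (M : ℝ) ^ (-2 * lam) * 1 := by
          apply mul_le_mul_of_nonneg_left _ (by positivity)
          refine le_trans ?_ hxe
          apply Finset.sum_le_sum_of_subset_of_nonneg (Finset.subset_univ _)
          intro j _ _
          have := hu0 j
          positivity
      _ = _ := mul_one _
  rw [← Finset.sum_add_sum_compl S]
  linarith

lemma lower_rho_lt_two (p : ℝ≥0∞) (hp : 1 ≤ p) (hp2 : p < 2) (lam : ℝ) (hlam : 0 < lam)
    (K T D : ℝ) (hK : 1 ≤ K) (hT : T ≤ K * lam) (hD0 : 0 < D)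
    (hD : ∀ n : ℕ, 1 ≤ n → ∀ y : ℝ, (n:ℝ) / 2 ≤ y → y ≤ 2 * (n:ℝ) ^ K →
      y ^ (1 - 1 / p.toReal - lam) ≤ D * (n:ℝ) ^ (1 / 2 - T))
    (ρ : ℝ) (hρ0 : 0 ≤ ρ) (hρ : ρ < T) :
    ∃ C : ℝ, 0 < C ∧ ∀ (m n : ℕ), 1 ≤ n → n < m →
        minrad p (fun j : Fin m => ((j : ℕ) + 1 : ℝ) ^ (-lam)) n ≤ C * (n : ℝ) ^ (-ρ) := by
  have hp' : p ≠ ∞ := (hp2.trans (by norm_num)).ne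
  have hP1 : 1 ≤ p.toReal := by
    have := ENNReal.toReal_mono hp' hp
    simpa using this
  have hP2 : p.toReal ≤ 2 := by
    have := ENNReal.toReal_mono (by norm_num) hp2.le
    simpa using this
  obtain ⟨d, hd0, hd1, hdρ⟩ : ∃ d : ℝ, 0 < d ∧ d < 1 ∧ ρ ≤ T - d :=
    ⟨min (T - ρ) (1 / 2), lt_min (by linarith) (by norm_num),
      lt_of_le_of_lt (min_le_right _ _) (by norm_num), by linarith [min_le_left (T - ρ) (1 / 2)]⟩
  set δ := d / (2 * K) with hδd
  have hK0 : 0 < K := by linarith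
  have hδ : 0 < δ := by positivity
  obtain ⟨C1, hC10, hC1⟩ := holderish p.toReal δ hP1 hδ
  obtain ⟨n0, hn0⟩ := ev_k K d hd0 hd1
  set B : ℝ := 16 * (D * 2 ^ δ * C1) ^ 2 + 1 with hB
  have hB0 : 0 < B := by positivity
  refine ⟨Real.sqrt B + (n0 + 1 : ℝ) ^ ρ, by positivity, fun m n hn hnm => ?_⟩
  have hnp : (0:ℝ) < n := by exact_mod_cast hn
  have hn1 : (1:ℝ) ≤ n := by exact_mod_cast hn
  rcases lt_or_ge n n0 with hlt | hge
  · refine le_trans (b := (1:ℝ)) ?_ ?_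
    · apply minrad_le p _ hnm.le ⊤ _ 1 zero_le_one
      · intro x _ hx
        have hab := mem_ellipsoid_abs p hp _ x hx
        rw [mem_ellipsoid_fin p hp hp'] at hx
        rw [one_pow]
        refine le_trans (Finset.sum_le_sum fun j _ => ?_) hx
        have hy1 : (1:ℝ) ≤ ((j : ℕ) + 1 : ℝ) := by
          have : (0:ℝ) ≤ (j : ℕ) := Nat.cast_nonneg _
          linarith
        have h2 : (0:ℝ) < ((j : ℕ) + 1 : ℝ) ^ (-lam) := by positivity
        have h3 : ((j : ℕ) + 1 : ℝ) ^ (-lam) ≤ 1 :=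
          Real.rpow_le_one_of_one_le_of_nonpos hy1 (by linarith)
        have h4 : |x j| ≤ |x j / ((j : ℕ) + 1 : ℝ) ^ (-lam)| := by
          rw [abs_div, abs_of_pos h2, le_div_iff₀ h2]
          nlinarith [abs_nonneg (x j)]
        have h5 : |x j / ((j : ℕ) + 1 : ℝ) ^ (-lam)| ≤ 1 := hab j
        rw [← sq_abs]
        refine (pow_le_pow_left₀ (abs_nonneg _) h4 2).trans ?_
        set w := |x j / ((j : ℕ) + 1 : ℝ) ^ (-lam)| with hw
        have hw0 : 0 ≤ w := abs_nonneg _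
        rw [← Real.rpow_natCast]
        rcases hw0.eq_or_lt with h0 | h0
        · rw [← h0, Real.zero_rpow (by norm_num), Real.zero_rpow (by linarith)]
        · exact Real.rpow_le_rpow_of_exponent_ge h0 h5 (by push_cast; exact hP2)
      · have h1 := (⊤ : Submodule ℝ (Fin m → ℝ)).finrank_quotient_add_finrank
        simp only [Module.finrank_fintype_fun_eq_card, Fintype.card_fin, finrank_top] at h1
        omega
    · have h1 : (n:ℝ) ≤ n0 + 1 := by
        have : (n:ℝ) ≤ n0 := by exact_mod_cast hlt.le
        linarith
      have h2 : (n:ℝ) ^ ρ ≤ (n0 + 1 : ℝ) ^ ρ := Real.rpow_le_rpow hnp.le h1 hρ0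
      have h3 : 0 ≤ Real.sqrt B := Real.sqrt_nonneg _
      have h4 : 0 < (n:ℝ) ^ ρ := by positivity
      rw [Real.rpow_neg hnp.le, ← div_eq_mul_inv, le_div_iff₀ h4]
      linarith
  · set k := ⌈(n:ℝ) ^ (1 - d)⌉₊ with hk
    set M := ⌈(n:ℝ) ^ K⌉₊ with hMd
    have hnK : 0 < (n:ℝ) ^ K := by positivity
    have hnd : 0 < (n:ℝ) ^ (1 - d) := by positivity
    have hk0 : 0 < k := Nat.ceil_pos.2 hnd
    have hM0 : 0 < M := Nat.ceil_pos.2 hnK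
    have hnK1 : 1 ≤ (n:ℝ) ^ K := Real.one_le_rpow hn1 hK0.le
    have hM1 : (n:ℝ) ^ K ≤ M := Nat.le_ceil _
    have hM2 : (M:ℝ) ≤ 2 * (n:ℝ) ^ K := by
      have := (Nat.ceil_lt_add_one hnK.le).le
      linarith
    have hk1 : (n:ℝ) ^ (1 - d) ≤ k := Nat.le_ceil _
    have hgood : (2 * (M : ℝ)) ^ k * (10 / 11) ^ (n - n / 2) < 1 := by
      refine lt_of_le_of_lt ?_ (hn0 n (n - n / 2) hge hn ?_)
      · rw [← hk]
        gcongr ?_ ^ k * _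
        linarith
      · have : n ≤ 2 * (n - n / 2) := by omega
        have : (n:ℝ) ≤ 2 * ((n - n / 2 : ℕ) : ℝ) := by exact_mod_cast this
        linarith
    set G : ℝ := D * (n:ℝ) ^ (1 / 2 - T) * (2 ^ δ * (n:ℝ) ^ (d / 2)) with hG
    obtain ⟨E, hE, hEx⟩ := upper_step p hp hp2 lam hlam δ C1 hδ hC1 m n k M hn hnm hk0 G (by positivity) hgood hM0 (by
      intro y hy1 hy2
      have hy0 : 0 < y := lt_of_lt_of_le (by positivity) hy1
      rw [Real.rpow_add hy0]
      have h1 := hD n hn y hy1 (hy2.trans hM2)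
      have h2 : y ^ δ ≤ 2 ^ δ * (n:ℝ) ^ (d / 2) := by
        refine (Real.rpow_le_rpow hy0.le (hy2.trans hM2) hδ.le).trans (le_of_eq ?_)
        rw [Real.mul_rpow (by norm_num) hnK.le, ← Real.rpow_mul hnp.le]
        congr 2
        rw [hδd]; field_simp
      exact mul_le_mul h1 h2 (by positivity) (by positivity))
    have hmain : minrad p (fun j : Fin m => ((j : ℕ) + 1 : ℝ) ^ (-lam)) n
        ≤ Real.sqrt B * (n : ℝ) ^ (-ρ) := by
      apply minrad_le p _ hnm.le E hE _ (by positivity)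
      intro x hx hxe
      refine (hEx x hx hxe).trans ?_
      rw [mul_pow (Real.sqrt B), Real.sq_sqrt hB0.le, hB, add_mul, one_mul]
      have e0 : ((n:ℝ) ^ (-ρ)) ^ 2 = (n:ℝ) ^ (-2 * ρ) := by
        rw [← Real.rpow_natCast, ← Real.rpow_mul hnp.le]; congr 1; push_cast; ring
      rw [e0]
      apply add_le_add
      · have e1 : (G * C1) ^ 2 = (D * 2 ^ δ * C1) ^ 2 * (n:ℝ) ^ (1 - 2 * T + d) := by
          have : (n:ℝ) ^ (1 - 2 * T + d) = ((n:ℝ) ^ (1 / 2 - T) * (n:ℝ) ^ (d / 2)) ^ 2 := by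
            rw [← Real.rpow_add hnp, ← Real.rpow_natCast, ← Real.rpow_mul hnp.le]
            congr 1; push_cast; ring
          rw [this, hG]; ring
        rw [div_le_iff₀ (by exact_mod_cast hk0), e1]
        have e2 : (n:ℝ) ^ (1 - 2 * T + d) ≤ (n:ℝ) ^ (-2 * ρ) * k := by
          calc (n:ℝ) ^ (1 - 2 * T + d) ≤ (n:ℝ) ^ (-2 * ρ + (1 - d)) :=
                Real.rpow_le_rpow_of_exponent_le hn1 (by linarith)
            _ = (n:ℝ) ^ (-2 * ρ) * (n:ℝ) ^ (1 - d) := Real.rpow_add hnp _ _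
            _ ≤ _ := by gcongr
        calc _ = 16 * (D * 2 ^ δ * C1) ^ 2 * (n:ℝ) ^ (1 - 2 * T + d) := by ring
          _ ≤ 16 * (D * 2 ^ δ * C1) ^ 2 * ((n:ℝ) ^ (-2 * ρ) * k) := by gcongr
          _ = _ := by ring
      · calc (M:ℝ) ^ (-2 * lam) ≤ ((n:ℝ) ^ K) ^ (-2 * lam) :=
              Real.rpow_le_rpow_of_nonpos hnK hM1 (by linarith)
          _ = (n:ℝ) ^ (K * (-2 * lam)) := by rw [← Real.rpow_mul hnp.le]
          _ ≤ _ := Real.rpow_le_rpow_of_exponent_le hn1 (by linarith)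
    refine hmain.trans ?_
    gcongr
    have : 0 ≤ (n0 + 1 : ℝ) ^ ρ := by positivity
    linarith

theorem final_aux (p : ℝ≥0∞) (hp : 1 ≤ p) (lam : ℝ)
    (hlam : max (1 / 2 - 1 / p.toReal) 0 < lam) :
    sSup {ρ : ℝ | 0 ≤ ρ ∧ ∃ C : ℝ, 0 < C ∧ ∀ (m n : ℕ), 1 ≤ n → n < m →
        minrad p (fun j : Fin m => ((j : ℕ) + 1 : ℝ) ^ (-lam)) n ≤ C * (n : ℝ) ^ (-ρ)} =
      if p < 2 ∧ lam < 1 - 1 / p.toReal then lam * pstar p / 2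
      else lam + 1 / p.toReal - 1 / 2 := by
  have hl0 : 0 < lam := (le_max_right _ _).trans_lt hlam
  have hl1 : 1 / 2 - 1 / p.toReal < lam := (le_max_left _ _).trans_lt hlam
  have key : ∀ (S : Set ℝ) (T : ℝ), 0 < T → (∀ ρ ∈ S, ρ ≤ T) → (∀ ρ, 0 ≤ ρ → ρ < T → ρ ∈ S) →
      sSup S = T := by
    intro S T hT h1 h2
    apply csSup_eq_of_forall_le_of_forall_lt_exists_gt ⟨0, h2 0 le_rfl hT⟩ h1
    intro w hw
    refine ⟨(max w 0 + T) / 2, h2 _ ?_ ?_, ?_⟩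
    · have := le_max_right w 0; linarith
    · have : max w 0 < T := max_lt hw hT
      linarith
    · have := le_max_left w 0; linarith
  split_ifs with hc
  · obtain ⟨hp2, hl⟩ := hc
    have hp' : p ≠ ∞ := (hp2.trans (by norm_num)).ne
    have hP2 : p.toReal ≤ 2 := by
      have := ENNReal.toReal_mono (by norm_num) hp2.le
      simpa using this
    have hP1 : 1 ≤ p.toReal := by
      have := ENNReal.toReal_mono hp' hp
      simpa using this
    have hps : pstar p = (1 - 1 / p.toReal)⁻¹ := rfl
    have hβ2 : 1 - 1 / p.toReal ≤ 1 / 2 := by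
      have : 1 / 2 ≤ 1 / p.toReal := one_div_le_one_div_of_le (by linarith) hP2
      linarith
    have hβ0 : 0 < 1 - 1 / p.toReal := hl0.trans hl
    apply key
    · rw [hps]; positivity
    · rintro ρ ⟨_, C, _, h⟩
      exact upper_rho_two p hp hp2 lam hl0 hl ρ C h
    · intro ρ hρ0 hρ
      refine ⟨hρ0, ?_⟩
      rw [hps] at hρ
      refine lower_rho_lt_two p hp hp2 lam hl0 (1 / (2 * (1 - 1 / p.toReal)))
        (lam * (1 - 1 / p.toReal)⁻¹ / 2) (2 ^ (1 - 1 / p.toReal - lam)) ?_ ?_ (by positivity) ?_ ρ hρ0 hρ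
      · rw [le_div_iff₀ (by positivity)]; linarith
      · apply le_of_eq; field_simp
      · intro n hn y hy1 hy2
        have hnp : (0:ℝ) < n := by exact_mod_cast hn
        have hy0 : 0 < y := lt_of_lt_of_le (by positivity) hy1
        refine (Real.rpow_le_rpow hy0.le hy2 (by linarith)).trans (le_of_eq ?_)
        rw [Real.mul_rpow (by norm_num) (by positivity), ← Real.rpow_mul hnp.le]
        congr 2
        set β := 1 - 1 / p.toReal
        field_simp
  · apply key
    · linarith
    · rintro ρ ⟨_, C, _, h⟩
      exact upper_rho_one p hp lam hl0 ρ C h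
    · intro ρ hρ0 hρ
      refine ⟨hρ0, ?_⟩
      by_cases hp2 : p < 2
      · have hl : 1 - 1 / p.toReal ≤ lam := by
          by_contra hcon
          exact hc ⟨hp2, not_le.1 hcon⟩
        refine lower_rho_lt_two p hp hp2 lam hl0
          (max 1 ((lam + 1 / p.toReal - 1 / 2) / lam))
          (lam + 1 / p.toReal - 1 / 2) (2⁻¹ ^ (1 - 1 / p.toReal - lam)) (le_max_left _ _) ?_
          (by positivity) ?_ ρ hρ0 hρ
        · rw [← div_le_iff₀ hl0]; exact le_max_right _ _
        · intro n hn y hy1 hy2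
          have hnp : (0:ℝ) < n := by exact_mod_cast hn
          refine (Real.rpow_le_rpow_of_nonpos (by positivity) hy1 (by linarith)).trans (le_of_eq ?_)
          rw [div_eq_mul_inv, mul_comm, Real.mul_rpow (by norm_num) hnp.le]
          congr 2
          ring
      · exact lower_rho_ge_two p (not_lt.1 hp2) lam ρ hρ0 hρ

/-- For `1 ≤ p ≤ ∞`, `σ_j = j^{-λ}` (0-indexed) with
`λ > (1/2 - 1/p)₊`, the polynomial decay rate of the minimal radius equals `λ p*/2` if
`1 ≤ p < 2` and `λ < 1/p* = 1 - 1/p`, and `λ + 1/p - 1/2` otherwise. -/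
theorem statement16 (p : ℝ≥0∞) (hp : 1 ≤ p) (lam : ℝ)
    (hlam : max (1 / 2 - 1 / p.toReal) 0 < lam) :
    sSup {ρ : ℝ | 0 ≤ ρ ∧ ∃ C : ℝ, 0 < C ∧ ∀ (m n : ℕ), 1 ≤ n → n < m →
        minrad p (fun j : Fin m => ((j : ℕ) + 1 : ℝ) ^ (-lam)) n ≤ C * (n : ℝ) ^ (-ρ)} =
      if p < 2 ∧ lam < 1 - 1 / p.toReal then lam * pstar p / 2
      else lam + 1 / p.toReal - 1 / 2 := by
  exact final_aux p hp lam hlam
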